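/- Interval Ordering: define, for sounds with L a b and L c d, '[a,b] < [c,d]' to mean that there exists x with C a b c x and L x d. Then for all a, b, c, d, e, f with L a b, L c d, and L e f: (1) exactly one of '[a,b] < [c,d]', 'C a b c d', '[c,d] < [a,b]' holds; (2) if [a,b] < [c,d] and C c d e f then [a,b] < [e,f]; (3) if [c,d] < [a,b] and C c d e f then [e,f] < [a,b]; (4) if [a,b] < [c,d] and [c,d] < [e,f] then [a,b] < [e,f]. -/

import Mathlib

/-- `x` is identical-pitched with `y`: neither is lower-pitched than the other. -/
def Ident {S : Type*} (L : S → S → Prop) (x y : S) : Prop := ¬ L x y ∧ ¬ L y x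

/-- For intervals greater than unit: `[a,b] < [c,d]` iff there is `x` lower-pitched
than `d` with `[a,b] ≅ [c,x]`. -/
def ILt {S : Type*} (L : S → S → Prop) (C : S → S → S → S → Prop) (a b c d : S) : Prop :=
  ∃ x : S, C a b c x ∧ L x d

/-!
Up to identical pitch, there is exactly one way to move an interval `[a,b]` to a given starting
sound `c`, say to `[c,x]`, so comparing `[a,b]` with `[c,d]` amounts to comparing `x` with `d`.
Everything then rests on motion being strictly monotone in the upper endpoint: if `L a x`, `L x b`
and `[a,x]` moves to `[c,y]`, then by Addition `[a,b]` moves to `[c,z]`, where `[y,z]` is `[x,b]`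
moved to `y`, and `L y z` by Regularity.
-/

section Pitch

variable {S : Type*} {L : S → S → Prop} {x y z : S}

theorem Ident.refl [Std.Irrefl L] (x : S) : Ident L x x :=
  IncompRel.refl L x

theorem Ident.symm (h : Ident L x y) : Ident L y x :=
  IncompRel.symm h

theorem Ident.trans [IsStrictWeakOrder S L] (hxy : Ident L x y) (hyz : Ident L y z) :
    Ident L x z :=
  IsStrictWeakOrder.incomp_trans x y z hxy hyz

theorem lower_of_lower_of_ident [IsStrictWeakOrder S L] (hxy : L x y) (hyz : Ident L y z) :
    L x z := by
  by_contra hxz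
  have hxz_ident : Ident L x z := ⟨hxz, fun hzx => hyz.2 (_root_.trans hzx hxy)⟩
  exact (hxz_ident.trans hyz.symm).1 hxy

theorem isStrictWeakOrder_of_separation (irrefl : ∀ x, ¬ L x x)
    (trans : ∀ x y z, L x y → L y z → L x z)
    (separation : ∀ x y z, L x y → ¬ (Ident L x z ∧ Ident L y z)) : IsStrictWeakOrder S L where
  irrefl := irrefl
  trans := trans
  incomp_trans x y z hxy hyz :=
    ⟨fun hxz => separation x z y hxz ⟨hxy, Ident.symm hyz⟩,
      fun hzx => separation z x y hzx ⟨Ident.symm hyz, hxy⟩⟩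

end Pitch

/-- `C a b c d`, read `[a,b] ≅ [c,d]`, is a congruence of intervals over the pitch relation `L`.
The fields are Reflexivity, Transitivity, Motion, and the parts of Regularity and Addition that
concern ascending intervals moved without reversal. -/
structure IsIntervalCongruence {S : Type*} (L : S → S → Prop) (C : S → S → S → S → Prop) :
    Prop where
  of_ident {a a' b b' : S} : Ident L a a' → Ident L b b' → C a b a' b'
  trans {a b c d e f : S} : C a b c d → C c d e f → C a b e f
  motion (x y a : S) : ∃ b, C x y a b ∧ ∀ b', C x y a b' → Ident L b b'
  lower_of_congr {a b c d : S} : L a b → C a b c d → L c d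
  add {a b c a' b' c' : S} : L a b → L b c → C a b a' b' → C b c b' c' → C a c a' c'

namespace IsIntervalCongruence

variable {S : Type*} {L : S → S → Prop} {C : S → S → S → S → Prop} {a b c d e f x y : S}

theorem exists_congr_from (hC : IsIntervalCongruence L C) (a b c : S) : ∃ x, C a b c x :=
  (hC.motion a b c).imp fun _ => And.left

theorem ilt_of_congr_of_ilt (hC : IsIntervalCongruence L C) (habcd : C a b c d)
    (h : ILt L C c d e f) : ILt L C a b e f :=
  h.imp fun _ => And.imp_left (hC.trans habcd)

theorem refl [Std.Irrefl L] (hC : IsIntervalCongruence L C) (a b : S) : C a b a b :=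
  hC.of_ident (.refl a) (.refl b)

theorem congr_of_congr_of_ident [Std.Irrefl L] (hC : IsIntervalCongruence L C)
    (h : C a b c x) (hxy : Ident L x y) : C a b c y :=
  hC.trans h (hC.of_ident (.refl c) hxy)

variable [IsStrictWeakOrder S L]

theorem ident_of_congr (hC : IsIntervalCongruence L C) (hx : C a b c x) (hy : C a b c y) :
    Ident L x y :=
  have ⟨_, _, ident_moved⟩ := hC.motion a b c
  (ident_moved x hx).symm.trans (ident_moved y hy)

theorem symm (hC : IsIntervalCongruence L C) (h : C a b c d) : C c d a b := by
  obtain ⟨x, hx⟩ := hC.exists_congr_from c d a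
  have hxb : Ident L x b := hC.ident_of_congr (hC.trans h hx) (hC.refl a b)
  exact hC.congr_of_congr_of_ident hx hxb

theorem motion_strictMono_right (hC : IsIntervalCongruence L C) (hax : L a x) (hxb : L x b)
    (hy : C a x c y) (hd : C a b c d) : L y d := by
  obtain ⟨z, hz⟩ := hC.exists_congr_from x b y
  have hzd : Ident L z d := hC.ident_of_congr (hC.add hax hxb hy hz) hd
  exact lower_of_lower_of_ident (hC.lower_of_congr hxb hz) hzd

theorem ilt_or_congr_or_ilt (hC : IsIntervalCongruence L C) (a b : S) (hcd : L c d) :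
    ILt L C a b c d ∨ C a b c d ∨ ILt L C c d a b := by
  obtain ⟨x, hx⟩ := hC.exists_congr_from a b c
  by_cases hxd : L x d
  · exact .inl ⟨x, hx, hxd⟩
  by_cases hdx : L d x
  · obtain ⟨y, hy⟩ := hC.exists_congr_from c d a
    exact .inr (.inr ⟨y, hy, hC.motion_strictMono_right hcd hdx hy (hC.symm hx)⟩)
  · exact .inr (.inl (hC.congr_of_congr_of_ident hx ⟨hxd, hdx⟩))

theorem not_ilt_of_congr (hC : IsIntervalCongruence L C) (h : C a b c d) : ¬ ILt L C a b c d :=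
  fun ⟨_, hx, hxd⟩ => (hC.ident_of_congr hx h).1 hxd

theorem ilt_of_ilt_of_congr (hC : IsIntervalCongruence L C) (hab : L a b)
    (h : ILt L C a b c d) (hcdef : C c d e f) : ILt L C a b e f := by
  obtain ⟨x, hx, hxd⟩ := h
  obtain ⟨y, hy⟩ := hC.exists_congr_from c x e
  exact ⟨y, hC.trans hx hy, hC.motion_strictMono_right (hC.lower_of_congr hab hx) hxd hy hcdef⟩

theorem ilt_trans (hC : IsIntervalCongruence L C) (hab : L a b) (h₁ : ILt L C a b c d)
    (h₂ : ILt L C c d e f) : ILt L C a b e f := by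
  obtain ⟨y, hy, hyf⟩ := h₂
  obtain ⟨x, hx, hxy⟩ := hC.ilt_of_ilt_of_congr hab h₁ hy
  exact ⟨x, hx, _root_.trans hxy hyf⟩

theorem ilt_asymm (hC : IsIntervalCongruence L C) (hab : L a b) (h : ILt L C a b c d) :
    ¬ ILt L C c d a b :=
  fun h' => hC.not_ilt_of_congr (hC.refl a b) (hC.ilt_trans hab h h')

end IsIntervalCongruence

theorem stmt_7_general {S : Type*} {L : S → S → Prop} {C : S → S → S → S → Prop}
    [IsStrictWeakOrder S L] (hC : IsIntervalCongruence L C) {a b c d : S} (e f : S)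
    (hab : L a b) (hcd : L c d) :
    ((ILt L C a b c d ∨ C a b c d ∨ ILt L C c d a b) ∧
      ¬ (ILt L C a b c d ∧ C a b c d) ∧
      ¬ (ILt L C a b c d ∧ ILt L C c d a b) ∧
      ¬ (C a b c d ∧ ILt L C c d a b)) ∧
    (ILt L C a b c d → C c d e f → ILt L C a b e f) ∧
    (ILt L C c d a b → C c d e f → ILt L C e f a b) ∧
    (ILt L C a b c d → ILt L C c d e f → ILt L C a b e f) :=
  ⟨⟨hC.ilt_or_congr_or_ilt a b hcd,
      fun ⟨hlt, hcongr⟩ => hC.not_ilt_of_congr hcongr hlt,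
      fun ⟨hlt, hgt⟩ => hC.ilt_asymm hab hlt hgt,
      fun ⟨hcongr, hgt⟩ => hC.not_ilt_of_congr (hC.symm hcongr) hgt⟩,
    hC.ilt_of_ilt_of_congr hab,
    fun hlt hcongr => hC.ilt_of_congr_of_ilt (hC.symm hcongr) hlt,
    hC.ilt_trans hab⟩

theorem stmt_7 {S : Type*} (L : S → S → Prop) (C : S → S → S → S → Prop)
    (A1 : ∀ x : S, ¬ L x x)
    (A2 : ∀ x y z : S, L x y → L y z → L x z)
    (A3 : ∃ x y : S, L x y)
    (A4 : ∀ x y z : S, L x y → ¬ (Ident L x z ∧ Ident L y z))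
    (A5a : ∀ x : S, ∃ a b : S, L a x ∧ L x b)
    (A5b : ∀ x y : S, L x y → ∃ a : S, L x a ∧ L a y)
    (C1 : ∀ a a' b b' : S, Ident L a a' → Ident L b b' → C a b a' b')
    (C2 : ∀ a b c d e f : S, C a b c d → C c d e f → C a b e f)
    (C3 : ∀ x y a : S, ∃ b : S, C x y a b ∧ ∀ b' : S, C x y a b' → Ident L b b')
    (C4a : ∀ a b c d : S, L a b → C a b c d → L c d)
    (C4b : ∀ a b c d : S, L a b → (C a b c d ↔ C b a d c))
    (C5a : ∀ a b c a' b' c' : S, L a b → L b c → C a b a' b' → C b c b' c' → C a c a' c')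
    (C5b : ∀ a b c a' b' c' : S, L a b → L b c → C a b b' a' → C b c c' b' → C a c c' a') :
    ∀ a b c d e f : S, L a b → L c d → L e f →
      ((ILt L C a b c d ∨ C a b c d ∨ ILt L C c d a b) ∧
        ¬ (ILt L C a b c d ∧ C a b c d) ∧
        ¬ (ILt L C a b c d ∧ ILt L C c d a b) ∧
        ¬ (C a b c d ∧ ILt L C c d a b)) ∧
      (ILt L C a b c d → C c d e f → ILt L C a b e f) ∧
      (ILt L C c d a b → C c d e f → ILt L C e f a b) ∧
      (ILt L C a b c d → ILt L C c d e f → ILt L C a b e f) := by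
  have := isStrictWeakOrder_of_separation A1 A2 A4
  exact fun _ _ _ _ e f hab hcd _ => stmt_7_general
    ⟨C1 _ _ _ _, C2 _ _ _ _ _ _, C3, C4a _ _ _ _, C5a _ _ _ _ _ _⟩ e f hab hcd
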